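/- Let R be a J-regular ring and n ≥ 1 a fixed integer. Then every n-generated small right ideal of R is a right annihilator (i.e., rl(I) = I) if and only if every n-generated right ideal of R is a right annihilator. -/

import Mathlib

open Pointwise

/-- The left annihilator `l(X) = {r : ∀ x ∈ X, r * x = 0}` of a subset of a ring. -/
def lAnn (R : Type*) [Ring R] (X : Set R) : Set R := {r : R | ∀ x ∈ X, r * x = 0}

/-- The right annihilator `r(X) = {r : ∀ x ∈ X, x * r = 0}` of a subset of a ring. -/
def rAnn (R : Type*) [Ring R] (X : Set R) : Set R := {r : R | ∀ x ∈ X, x * r = 0}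

/-- A right ideal of `R` (a submodule of `R` as a right `R`-module, i.e. an
`Rᵐᵒᵖ`-submodule) is small if `I + K ≠ R` for every proper right ideal `K`. -/
def IsSmallRightIdeal (R : Type*) [Ring R] (I : Submodule Rᵐᵒᵖ R) : Prop :=
  ∀ K : Submodule Rᵐᵒᵖ R, K ≠ ⊤ → I ⊔ K ≠ ⊤

/-- A left ideal of `R` is small if `I + K ≠ R` for every proper left ideal `K`. -/
def IsSmallLeftIdeal (R : Type*) [Ring R] (I : Ideal R) : Prop :=
  ∀ K : Ideal R, K ≠ ⊤ → I ⊔ K ≠ ⊤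

/-- `R` is right small dual if `rl(I) = I` for every small right ideal `I`. -/
def IsRightSmallDual (R : Type*) [Ring R] : Prop :=
  ∀ I : Submodule Rᵐᵒᵖ R, IsSmallRightIdeal R I → rAnn R (lAnn R (I : Set R)) = (I : Set R)

/-- `R` is left small dual if `lr(I) = I` for every small left ideal `I`. -/
def IsLeftSmallDual (R : Type*) [Ring R] : Prop :=
  ∀ I : Ideal R, IsSmallLeftIdeal R I → lAnn R (rAnn R (I : Set R)) = (I : Set R)

/-- `R` is right dual if `rl(I) = I` for every right ideal `I`. -/
def IsRightDual (R : Type*) [Ring R] : Prop :=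
  ∀ I : Submodule Rᵐᵒᵖ R, rAnn R (lAnn R (I : Set R)) = (I : Set R)

/-- `R` is left dual if `lr(I) = I` for every left ideal `I`. -/
def IsLeftDual (R : Type*) [Ring R] : Prop :=
  ∀ I : Ideal R, lAnn R (rAnn R (I : Set R)) = (I : Set R)

/-- A right `R`-module is torsionless if its nonzero elements are separated by
right `R`-linear maps to `R`. -/
def IsTorsionlessRight (R : Type*) [Ring R] (M : Type*) [AddCommGroup M] [Module Rᵐᵒᵖ M] : Prop :=
  ∀ m : M, m ≠ 0 → ∃ f : M →ₗ[Rᵐᵒᵖ] R, f m ≠ 0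

/-- The left annihilator of a subset, as a left ideal. -/
def lAnnIdeal (R : Type*) [Ring R] (X : Set R) : Ideal R where
  carrier := {r : R | ∀ x ∈ X, r * x = 0}
  add_mem' := fun {a b} ha hb x hx => by rw [add_mul, ha x hx, hb x hx, add_zero]
  zero_mem' := fun x _ => zero_mul x
  smul_mem' := fun c a ha x hx => by
    simp only [smul_eq_mul, Set.mem_setOf_eq] at *
    rw [mul_assoc, ha x hx, mul_zero]

/-- A right ideal `I` has a weak supplement if there is a right ideal `K` with
`I + K = R` and `I ∩ K` small. -/
def HasWeakSupplementRight (R : Type*) [Ring R] (I : Submodule Rᵐᵒᵖ R) : Prop :=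
  ∃ K : Submodule Rᵐᵒᵖ R, I ⊔ K = ⊤ ∧ IsSmallRightIdeal R (I ⊓ K)

/-- A left ideal `I` has a weak supplement if there is a left ideal `K` with
`I + K = R` and `I ∩ K` small. -/
def HasWeakSupplementLeft (R : Type*) [Ring R] (I : Ideal R) : Prop :=
  ∃ K : Ideal R, I ⊔ K = ⊤ ∧ IsSmallLeftIdeal R (I ⊓ K)

/-- `R` is semilocal if `R/J(R)` is a semisimple ring (equivalently, a semisimple
left `R`-module). -/
def IsSemilocalRing (R : Type*) [Ring R] : Prop :=
  IsSemisimpleModule R (R ⧸ Ideal.jacobson (⊥ : Ideal R))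

/-- `R` is semiperfect if it is semilocal and idempotents lift modulo `J(R)`. -/
def IsSemiperfectRing (R : Type*) [Ring R] : Prop :=
  IsSemilocalRing R ∧
    ∀ a : R, a * a - a ∈ Ideal.jacobson (⊥ : Ideal R) →
      ∃ e : R, e * e = e ∧ e - a ∈ Ideal.jacobson (⊥ : Ideal R)

/-- `R` is `J`-regular if `R/J(R)` is von Neumann regular. -/
def IsJRegular (R : Type*) [Ring R] : Prop :=
  ∀ a : R, ∃ b : R, a * b * a - a ∈ Ideal.jacobson (⊥ : Ideal R)

/-- `R` is left perfect: `R/J(R)` is semisimple and `J(R)` is left T-nilpotent. -/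
def IsLeftPerfect (R : Type*) [Ring R] : Prop :=
  IsSemilocalRing R ∧
    ∀ a : ℕ → R, (∀ i, a i ∈ Ideal.jacobson (⊥ : Ideal R)) →
      ∃ n : ℕ, (List.ofFn fun i : Fin (n + 1) => a i).prod = 0

/-- A right ideal `E` is essential if `E ∩ T ≠ 0` for every nonzero right ideal `T`. -/
def IsEssentialRightIdeal (R : Type*) [Ring R] (E : Submodule Rᵐᵒᵖ R) : Prop :=
  ∀ T : Submodule Rᵐᵒᵖ R, T ≠ ⊥ → E ⊓ T ≠ ⊥

/-!
Given a finitely generated right ideal `I`, the von Neumann inverses modulo `J(R)` of successive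
elements produce `e ∈ I` such that `u = 1 - e` satisfies `u I ⊆ J(R)`. Then `u I` is small, and it
needs no more generators than `I`, so it is a right annihilator. Since left multiplication by `u`
is the identity modulo `I`, an `x` with `u x ∈ u I` already lies in `I`; as `u · rl(I) ⊆ rl(u I)`,
this gives `rl(I) ⊆ I`.
-/

section

variable {R : Type*} [Ring R] {I : Submodule Rᵐᵒᵖ R} {u x : R}

/-- The Jacobson radical `J(R)` viewed as a right ideal, for comparison with other right ideals.
Its carrier is the Jacobson radical of Mathlib, an intersection of maximal left ideals. -/
def jacobsonRight (R : Type*) [Ring R] : Submodule Rᵐᵒᵖ R where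
  carrier := Ideal.jacobson (⊥ : Ideal R)
  add_mem' := add_mem
  zero_mem' := zero_mem _
  smul_mem' r _ hx := Ideal.mul_mem_right r.unop _ hx

theorem isUnit_one_sub_of_mem_jacobson_bot (hx : x ∈ Ideal.jacobson (⊥ : Ideal R)) :
    IsUnit (1 - x) := by
  have exists_left_inv {y : R} (hy : y ∈ Ideal.jacobson (⊥ : Ideal R)) :
      ∃ z, z * (y + 1) = 1 := by
    obtain ⟨z, hz⟩ := Ideal.exists_mul_add_sub_mem_of_mem_jacobson y hy
    exact ⟨z, sub_eq_zero.mp hz⟩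
  obtain ⟨z, hz⟩ := exists_left_inv (neg_mem hx)
  -- The left inverse `z` of `1 - x` equals `z * x + 1`, so it has a left inverse as well.
  have hz_eq : z * x + 1 = z := by rw [← hz]; noncomm_ring
  obtain ⟨w, hw⟩ := exists_left_inv (Ideal.mul_mem_left _ z hx)
  rw [hz_eq] at hw
  have hw_eq : w = -x + 1 := left_inv_eq_right_inv hw hz
  rw [← neg_add_eq_sub]
  exact isUnit_iff_exists_and_exists.mpr ⟨⟨z, hw_eq ▸ hw⟩, ⟨z, hz⟩⟩

theorem isSmallRightIdeal_of_le_jacobsonRight (hI : I ≤ jacobsonRight R) :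
    IsSmallRightIdeal R I := by
  intro K hK hIK
  obtain ⟨j, hj, k, hk, hjk⟩ := Submodule.mem_sup.mp (hIK ▸ Submodule.mem_top : (1 : R) ∈ I ⊔ K)
  obtain ⟨z, hkz⟩ : ∃ z, k * z = 1 := by
    rw [eq_sub_of_add_eq' hjk]
    exact (isUnit_one_sub_of_mem_jacobson_bot (hI hj)).exists_right_inv
  refine hK (Submodule.eq_top_iff'.mpr fun x ↦ ?_)
  have hkzx : k * (z * x) ∈ K := K.smul_mem (MulOpposite.op (z * x)) hk
  rwa [← mul_assoc, hkz, one_mul] at hkzx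

theorem mul_mem_iff_of_one_sub_mem (hu : 1 - u ∈ I) : u * x ∈ I ↔ x ∈ I := by
  have hsub : x - u * x ∈ I := by
    rw [← one_sub_mul]
    exact I.smul_mem (MulOpposite.op x) hu
  exact ⟨fun h ↦ (I.sub_mem_iff_left h).mp hsub, fun h ↦ (I.sub_mem_iff_right h).mp hsub⟩

theorem IsJRegular.exists_one_sub_mul_mem (hJ : IsJRegular R) (hu : 1 - u ∈ I) (hx : x ∈ I) :
    ∃ c : R, 1 - c * u ∈ I ∧ c * u * x ∈ Ideal.jacobson (⊥ : Ideal R) := by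
  obtain ⟨b, hb⟩ := hJ (u * x)
  have hux : u * x ∈ I := (mul_mem_iff_of_one_sub_mem hu).mpr hx
  refine ⟨1 - u * x * b, ?_, ?_⟩
  · rw [show 1 - (1 - u * x * b) * u = (1 - u) + u * x * (b * u) by noncomm_ring]
    exact I.add_mem hu (I.smul_mem (MulOpposite.op (b * u)) hux)
  · rw [show (1 - u * x * b) * u * x = -(u * x * b * (u * x) - u * x) by noncomm_ring]
    exact neg_mem hb

theorem IsJRegular.exists_one_sub_mem_forall_mul_mem (hJ : IsJRegular R) {s : Set R}
    (hs : s.Finite) (hsI : s ⊆ I) :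
    ∃ u : R, 1 - u ∈ I ∧ ∀ x ∈ s, u * x ∈ Ideal.jacobson (⊥ : Ideal R) := by
  induction s, hs using Set.Finite.induction_on with
  | empty => exact ⟨1, by simp, by simp⟩
  | @insert a s _ _ ih =>
    obtain ⟨haI, hsI⟩ := Set.insert_subset_iff.mp hsI
    obtain ⟨u, hu, hus⟩ := ih hsI
    obtain ⟨c, hcu, hcua⟩ := hJ.exists_one_sub_mul_mem hu haI
    refine ⟨c * u, hcu, Set.forall_mem_insert.mpr ⟨hcua, fun x hx ↦ ?_⟩⟩
    rw [mul_assoc]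
    exact Ideal.mul_mem_left _ c (hus x hx)

theorem IsJRegular.exists_map_mulLeft_le_jacobsonRight (hJ : IsJRegular R) (hI : I.FG) :
    ∃ u : R, 1 - u ∈ I ∧ I.map (LinearMap.mulLeft Rᵐᵒᵖ u) ≤ jacobsonRight R := by
  obtain ⟨s, hs, rfl⟩ := Submodule.fg_def.mp hI
  obtain ⟨u, hu, hus⟩ := hJ.exists_one_sub_mem_forall_mul_mem hs Submodule.subset_span
  exact ⟨u, hu, (Submodule.map_span_le _ _ _).mpr hus⟩

theorem subset_rAnn_lAnn (X : Set R) : X ⊆ rAnn R (lAnn R X) :=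
  fun x hx _ hr ↦ hr x hx

theorem mul_mem_rAnn_lAnn_image {X : Set R} (hx : x ∈ rAnn R (lAnn R X)) (u : R) :
    u * x ∈ rAnn R (lAnn R ((u * ·) '' X)) := by
  intro r hr
  rw [← mul_assoc]
  refine hx (r * u) fun y hy ↦ ?_
  rw [mul_assoc]
  exact hr _ (Set.mem_image_of_mem _ hy)

theorem rAnn_lAnn_eq_of_map_mulLeft (hu : 1 - u ∈ I)
    (h : rAnn R (lAnn R (I.map (LinearMap.mulLeft Rᵐᵒᵖ u) : Set R)) =
      (I.map (LinearMap.mulLeft Rᵐᵒᵖ u) : Set R)) :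
    rAnn R (lAnn R (I : Set R)) = (I : Set R) := by
  refine Set.Subset.antisymm (fun x hx ↦ ?_) (subset_rAnn_lAnn _)
  obtain ⟨y, hy, hyx : u * y = u * x⟩ := h.subset (mul_mem_rAnn_lAnn_image hx u)
  have huy : u * y ∈ I := (mul_mem_iff_of_one_sub_mem hu).mpr hy
  exact (mul_mem_iff_of_one_sub_mem hu).mp (hyx ▸ huy)

end

/-- Over a `J`-regular ring `R`, for a fixed `n ≥ 1`, every
`n`-generated small right ideal is a right annihilator iff every `n`-generated right
ideal is a right annihilator. -/
theorem jRegular_nGen_small_annihilator_iff (R : Type*) [Ring R] (hJ : IsJRegular R)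
    (n : ℕ) (hn : 1 ≤ n) :
    (∀ I : Submodule Rᵐᵒᵖ R, (∃ g : Fin n → R, I = Submodule.span Rᵐᵒᵖ (Set.range g)) →
        IsSmallRightIdeal R I → rAnn R (lAnn R (I : Set R)) = (I : Set R)) ↔
    (∀ I : Submodule Rᵐᵒᵖ R, (∃ g : Fin n → R, I = Submodule.span Rᵐᵒᵖ (Set.range g)) →
        rAnn R (lAnn R (I : Set R)) = (I : Set R)) := by
  refine ⟨?_, fun h I hI _ ↦ h I hI⟩
  rintro h _ ⟨g, rfl⟩
  obtain ⟨u, hu, hmap⟩ :=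
    hJ.exists_map_mulLeft_le_jacobsonRight (Submodule.fg_span (Set.finite_range g))
  refine rAnn_lAnn_eq_of_map_mulLeft hu
    (h _ ⟨fun i ↦ u * g i, ?_⟩ (isSmallRightIdeal_of_le_jacobsonRight hmap))
  rw [Submodule.map_span, ← Set.range_comp]
  rfl
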